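/- arXiv:2104.04974 — 6 statements merged into one kernel-verified Lean document; each statement's English description precedes it below -/
import Mathlib

section
/- For all integers p ≥ 2 and all integers i with 1 ≤ i ≤ ⌊p/2⌋, the product i!·(p−2i)! divides p·(p−i−1)!; consequently a(p,i) := p·(p−i−1)!/(i!·(p−2i)!) is a positive integer. -/
/-!
Writing `p = (p - i) + i` gives `p * (p - i - 1)! = (p - i)! + i * (p - i - 1)!`. The first summand
is a multiple of `i! * (p - 2i)!` with quotient `(p - i).choose i`; the second is
`i * (i - 1)! * (p - 2i)! = i! * (p - 2i)!` times `(p - i - 1).choose (i - 1)`.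
-/

/-- For all integers `p ≥ 2` and all integers `i` with `1 ≤ i ≤ ⌊p/2⌋`,
the product `i! * (p - 2i)!` divides `p * (p - i - 1)!`; consequently
`a(p,i) = p * (p - i - 1)! / (i! * (p - 2i)!)` is a positive integer. -/
theorem stmt_0 (p i : ℕ) (hp : 2 ≤ p) (hi : 1 ≤ i) (hip : i ≤ p / 2) :
    (Nat.factorial i * Nat.factorial (p - 2 * i)) ∣ p * Nat.factorial (p - i - 1) ∧
    0 < p * Nat.factorial (p - i - 1) / (Nat.factorial i * Nat.factorial (p - 2 * i)) := by
  have hdvd : (Nat.factorial i * Nat.factorial (p - 2 * i)) ∣ p * Nat.factorial (p - i - 1) := by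
    obtain ⟨j, rfl⟩ : ∃ j, i = j + 1 := ⟨i - 1, by omega⟩
    obtain ⟨k, rfl⟩ : ∃ k, p = 2 * (j + 1) + k := ⟨p - 2 * (j + 1), by omega⟩
    have e1 : 2 * (j + 1) + k - 2 * (j + 1) = k := by omega
    have e2 : 2 * (j + 1) + k - (j + 1) - 1 = j + k := by omega
    rw [e1, e2]
    have split : (2 * (j + 1) + k) * (j + k).factorial
        = (j + 1 + k).factorial + (j + 1) * (j + k).factorial := by
      rw [show j + 1 + k = (j + k) + 1 by omega, Nat.factorial_succ]
      ring
    rw [split]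
    refine dvd_add (Nat.factorial_mul_factorial_dvd_factorial_add _ _) ?_
    rw [Nat.factorial_succ, mul_assoc]
    exact mul_dvd_mul_left _ (Nat.factorial_mul_factorial_dvd_factorial_add _ _)
  exact ⟨hdvd, Nat.div_pos (Nat.le_of_dvd (by positivity) hdvd) (by positivity)⟩
end

section
/- Let x and y be elements of a commutative ring and let p ≥ 2 be an integer. Then (x+y)^p = x^p + y^p − Σ_{i=1}^{⌊p/2⌋} a(p,i)·(−x·y)^i·(x+y)^{p−2i}, where a(p,i) = p·(p−i−1)!/(i!·(p−2i)!) is a positive integer and a(p,i)·z denotes integer scalar multiplication in the ring. -/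
/-!
Put `s = x + y` and `q = -(x * y)`. The power sums `x ^ n + y ^ n` satisfy the recurrence
`u (n + 2) = s * u (n + 1) + q * u n`, and so do the Fibonacci-type polynomials
`fibPoly q s n = ∑ i, (n - i).choose i * q ^ i * s ^ (n - 2 * i)`, by Pascal's rule
(`fibPoly_add_two`). Comparing initial values gives the Lucas-type identity
`x ^ (n + 2) + y ^ (n + 2) = fibPoly q s (n + 2) + q * fibPoly q s n` (`pow_add_pow_eq`).
The coefficient of `q ^ j * s ^ (p - 2 * j)` on the right, for `p = n + 2` and `j ≥ 1`, is
`(p - j).choose j + (p - j - 1).choose (j - 1)`, which equals `a(p, j)` (`coeff_eq`).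
-/

/-- The bivariate Fibonacci polynomial `∑ i, (n - i).choose i * q ^ i * s ^ (n - 2 * i)`. The
summation range exceeds `i ≤ n / 2`; the binomial coefficient vanishes at the extra indices. -/
def fibPoly {R : Type*} [CommRing R] (q s : R) (n : ℕ) : R :=
  ∑ i ∈ Finset.range (n + 1), ((n - i).choose i : R) * q ^ i * s ^ (n - 2 * i)

/-- The sum defining `fibPoly q s (n + 1)` with its leading term split off. -/
lemma fibPoly_succ {R : Type*} [CommRing R] (q s : R) (n : ℕ) :
    fibPoly q s (n + 1) = s ^ (n + 1) + ∑ i ∈ Finset.range (n + 1),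
      ((n - i).choose (i + 1) : R) * q ^ (i + 1) * s ^ (n + 1 - 2 * (i + 1)) := by
  rw [fibPoly, Finset.sum_range_succ', add_comm]
  simp

lemma fibPoly_add_two {R : Type*} [CommRing R] (q s : R) (n : ℕ) :
    fibPoly q s (n + 2) = s * fibPoly q s (n + 1) + q * fibPoly q s n := by
  rw [fibPoly_succ q s (n + 1), fibPoly_succ q s n, Finset.sum_range_succ, fibPoly]
  simp only [Nat.sub_self, Nat.choose_zero_succ, Nat.cast_zero, zero_mul, add_zero]
  rw [mul_add s, Finset.mul_sum, Finset.mul_sum, add_assoc (s * _),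
    ← Finset.sum_add_distrib, ← pow_succ']
  congr 1
  refine Finset.sum_congr rfl fun i hi => ?_
  have hi' : i ≤ n := Nat.lt_succ_iff.mp (Finset.mem_range.mp hi)
  rw [Nat.succ_sub hi', Nat.choose_succ_succ, show n + 1 + 1 - 2 * (i + 1) = n - 2 * i by omega]
  push_cast
  rcases Nat.lt_or_ge (n - i) (i + 1) with h | h
  · rw [Nat.choose_eq_zero_of_lt h]
    push_cast
    ring
  · rw [show n - 2 * i = (n + 1 - 2 * (i + 1)) + 1 by omega]
    ring

lemma pow_add_pow_eq {R : Type*} [CommRing R] (x y : R) (n : ℕ) :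
    x ^ (n + 2) + y ^ (n + 2) =
      fibPoly (-(x * y)) (x + y) (n + 2) + -(x * y) * fibPoly (-(x * y)) (x + y) n := by
  induction n using Nat.twoStepInduction with
  | zero =>
    rw [fibPoly_add_two]
    simp [fibPoly, Finset.sum_range_succ]
    ring
  | one =>
    rw [fibPoly_add_two, fibPoly_add_two]
    simp [fibPoly, Finset.sum_range_succ]
    ring
  | more n h0 h1 =>
    have e2 := fibPoly_add_two (-(x * y)) (x + y) n
    have e4 := fibPoly_add_two (-(x * y)) (x + y) (n + 2)
    rw [show n + 1 + 2 = n + 2 + 1 by ring] at h1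
    linear_combination (x + y) * h1 - (x * y) * h0 - e4 + (x * y) * e2

/-- The identity `a(p, j) = (p - j).choose j + (p - j - 1).choose (j - 1)`, written with
`p = n + 2` and `j = i + 1`. -/
lemma coeff_eq (n i : ℕ) (h : 2 * i ≤ n) :
    (n + 2) * (n - i).factorial / ((i + 1).factorial * (n - 2 * i).factorial) =
      (n + 1 - i).choose (i + 1) + (n - i).choose i := by
  obtain ⟨k, rfl⟩ := Nat.exists_eq_add_of_le' h
  rw [show k + 2 * i - i = k + i by omega, show k + 2 * i + 1 - i = k + (i + 1) by omega,
    show k + 2 * i - 2 * i = k by omega]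
  apply Nat.div_eq_of_eq_mul_left (by positivity)
  have h1 := Nat.add_choose_mul_factorial_mul_factorial k (i + 1)
  have h2 := Nat.add_choose_mul_factorial_mul_factorial k i
  rw [← add_assoc, Nat.factorial_succ (k + i)] at h1
  rw [← add_assoc]
  rw [Nat.factorial_succ i] at h1 ⊢
  linear_combination -h1 - (i + 1) * h2

/-- For `x, y` in a commutative ring and an integer `p ≥ 2`,
`(x+y)^p = x^p + y^p − Σ_{i=1}^{⌊p/2⌋} a(p,i) • ((−x·y)^i · (x+y)^{p−2i})`,
where `a(p,i) = p·(p−i−1)!/(i!·(p−2i)!)` (a positive integer) and `•` is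
integer (natural number) scalar multiplication in the ring. -/
theorem stmt_1 {R : Type*} [CommRing R] (x y : R) (p : ℕ) (hp : 2 ≤ p) :
    (x + y) ^ p =
      x ^ p + y ^ p -
        ∑ i ∈ Finset.Icc 1 (p / 2),
          (p * Nat.factorial (p - i - 1) / (Nat.factorial i * Nat.factorial (p - 2 * i))) •
            ((-(x * y)) ^ i * (x + y) ^ (p - 2 * i)) := by
  obtain ⟨n, rfl⟩ := Nat.exists_eq_add_of_le' hp
  rw [pow_add_pow_eq, fibPoly_succ, Finset.sum_range_succ, fibPoly, Finset.mul_sum]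
  simp only [Nat.sub_self, Nat.choose_zero_succ, Nat.cast_zero, zero_mul, add_zero]
  rw [add_assoc, ← Finset.sum_add_distrib, eq_sub_iff_add_eq]
  congr 1
  rw [← Finset.Ico_add_one_right_eq_Icc, Finset.sum_Ico_eq_sum_range]
  -- The indices `i` with `2 * i > n` contribute zero on the right.
  refine Finset.sum_subset_zero_on_sdiff (fun i hi => ?_) (fun i hi => ?_) (fun i hi => ?_)
  · simp only [Finset.mem_range] at hi ⊢
    omega
  · simp only [Finset.mem_sdiff, Finset.mem_range] at hi
    rw [Nat.choose_eq_zero_of_lt (show n + 1 - i < i + 1 by omega),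
      Nat.choose_eq_zero_of_lt (show n - i < i by omega)]
    simp
  · simp only [Finset.mem_range] at hi
    rw [add_comm 1 i, show n + 2 - (i + 1) - 1 = n - i by omega,
      show n + 2 - 2 * (i + 1) = n - 2 * i by omega, coeff_eq n i (by omega), nsmul_eq_mul]
    push_cast
    ring
end

section
/- Let Q be an n×n real matrix, b ∈ ℝ^n, and let x* ∈ ℝ^n satisfy Q x* = b. Fix an integer p ≥ 2 and a real number σ, and let x₊ = Σ_{i=0}^p C(p,i) σ^i Δ^i x be the p-order ACX extrapolation from x ∈ ℝ^n with step length σ. Then x₊ − x* = (I − σQ)^p (x − x*), where I is the n×n identity matrix. -/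
/-!
Since `Q x* = b`, the map satisfies `F(x) - x = -Q (x - x*)`, so each forward difference of order
`i ≥ 1` is `(-Q)^i (x - x*)`, while `Δ⁰x = (x - x*) + x*` carries the only extra term `x*`
(`acxDelta_eq`). The extrapolation minus `x*` is therefore the binomial expansion of
`(I + σ(-Q))^p` applied to `x - x*`.
-/

open Matrix

/-- The affine mapping `F(x) = x − (Qx − b)`. -/
noncomputable def acxF {n : ℕ} (Q : Matrix (Fin n) (Fin n) ℝ) (b : Fin n → ℝ) :
    (Fin n → ℝ) → Fin n → ℝ :=
  fun x => x - (Q.mulVec x - b)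

/-- Forward differences of `F(x) = x − (Qx − b)`:
`Δ⁰x = x` and `Δ^{p+1} x = Δ^p F(x) − Δ^p x`. -/
noncomputable def acxDelta {n : ℕ} (Q : Matrix (Fin n) (Fin n) ℝ) (b : Fin n → ℝ) :
    ℕ → (Fin n → ℝ) → Fin n → ℝ
  | 0 => fun x => x
  | p + 1 => fun x => acxDelta Q b p (acxF Q b x) - acxDelta Q b p x

/-- Closed form of the forward differences around a fixed point; the term `x*` survives only at
order `0`. -/
theorem acxDelta_eq {n : ℕ} (Q : Matrix (Fin n) (Fin n) ℝ) (b xstar : Fin n → ℝ)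
    (hfix : Q.mulVec xstar = b) (i : ℕ) (x : Fin n → ℝ) :
    acxDelta Q b i x = ((-Q) ^ i).mulVec (x - xstar) + if i = 0 then xstar else 0 := by
  induction i generalizing x with
  | zero => simp [acxDelta]
  | succ k ih =>
    have h : acxF Q b x - xstar - (x - xstar) = (-Q).mulVec (x - xstar) := by
      rw [Matrix.neg_mulVec, Matrix.mulVec_sub, hfix, acxF]
      abel
    simp only [acxDelta, ih, add_sub_add_right_eq_sub, ← Matrix.mulVec_sub, h,
      Matrix.mulVec_mulVec, ← pow_succ]
    simp

/-- For `F(x) = x − (Qx − b)` with `Q x* = b`, an integer `p ≥ 2`, a real `σ`,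
and `x₊ = Σ_{i=0}^p C(p,i) σ^i Δ^i x`, one has `x₊ − x* = (I − σQ)^p (x − x*)`. -/
theorem stmt_3 {n : ℕ} (Q : Matrix (Fin n) (Fin n) ℝ) (b xstar : Fin n → ℝ)
    (hfix : Q.mulVec xstar = b) (p : ℕ) (hp : 2 ≤ p) (σ : ℝ) (x : Fin n → ℝ) :
    (∑ i ∈ Finset.range (p + 1), ((p.choose i : ℝ) * σ ^ i) • acxDelta Q b i x) - xstar =
      ((1 - σ • Q) ^ p).mulVec (x - xstar) := by
  have hbin : (1 - σ • Q) ^ p =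
      ∑ i ∈ Finset.range (p + 1), ((p.choose i : ℝ) * σ ^ i) • (-Q) ^ i := by
    rw [show (1 - σ • Q) = σ • (-Q) + 1 by rw [smul_neg]; abel,
      (Commute.one_right (σ • (-Q))).add_pow]
    refine Finset.sum_congr rfl fun i _ => ?_
    rw [one_pow, mul_one, smul_pow, ← nsmul_eq_mul', ← Nat.cast_smul_eq_nsmul ℝ, smul_smul]
  -- Only the order-zero term contributes `xstar`, with coefficient `1`.
  have hstar : ∑ i ∈ Finset.range (p + 1),
      ((p.choose i : ℝ) * σ ^ i) • (if i = 0 then xstar else 0) = xstar := by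
    simp
  simp only [acxDelta_eq Q b xstar hfix, smul_add, Finset.sum_add_distrib, hstar,
    add_sub_cancel_right, hbin, Matrix.sum_mulVec, Matrix.smul_mulVec]
end

section
/- Let Q be an n×n real symmetric positive definite matrix whose smallest and largest eigenvalues are λ_min and λ_max, let p ≥ 2 be an integer, let e ∈ ℝ^n be nonzero, and set σ = (eᵀQ^{2p−1}e)/(eᵀQ^{2p}e). Then ‖(I − σQ)^p e‖_{Q⁻¹} ≤ √((λ_max − λ_min)/λ_max) · ‖e‖_{Q⁻¹}. -/
open Matrix

/-!
Diagonalise `Q = U diag(d) Uᵀ` and put `c = Uᵀ e`, so that every quadratic form in `e` occurring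
in the statement becomes a weighted sum `∑ i, g i * c i ^ 2`. The choice of `σ` means
`∑ i, d i ^ (2p-1) * (σ * d i - 1) * c i ^ 2 = 0`, and it forces `1 / lmax ≤ σ`. The
estimate then follows by summing, with `x = σ * d i`, the scalar inequality
`(1 - x) ^ (2p) ≤ (1 - lmin / lmax) + x ^ (2p) * (x - 1)` (`scalar_bound`) against the weights
`c i ^ 2 / d i`: the last term contributes nothing.
-/

/-- `U diag(g) Uᵀ`: for orthogonal `U`, the symmetric matrix with eigenvalues `g` on the columns
of `U`. -/
noncomputable def conjDiag {n : ℕ} (U : Matrix (Fin n) (Fin n) ℝ) (g : Fin n → ℝ) :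
    Matrix (Fin n) (Fin n) ℝ := U * diagonal g * Uᵀ

section conjDiag

variable {n : ℕ} {U : Matrix (Fin n) (Fin n) ℝ}

lemma conjDiag_mul (hU : Uᵀ * U = 1) (g h : Fin n → ℝ) :
    conjDiag U g * conjDiag U h = conjDiag U (fun i => g i * h i) := by
  unfold conjDiag
  calc U * diagonal g * Uᵀ * (U * diagonal h * Uᵀ)
      = U * diagonal g * (Uᵀ * U) * diagonal h * Uᵀ := by simp only [Matrix.mul_assoc]
    _ = U * (diagonal g * diagonal h) * Uᵀ := by
      rw [hU, Matrix.mul_one]; simp only [Matrix.mul_assoc]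
    _ = _ := by rw [diagonal_mul_diagonal]

lemma conjDiag_one (hU : Uᵀ * U = 1) : conjDiag U (fun _ => 1) = 1 := by
  simp [conjDiag, mul_eq_one_comm.mp hU]

lemma conjDiag_pow (hU : Uᵀ * U = 1) (g : Fin n → ℝ) (k : ℕ) :
    conjDiag U g ^ k = conjDiag U (fun i => g i ^ k) := by
  induction k with
  | zero => simp [conjDiag_one hU]
  | succ k ih => rw [pow_succ, ih, conjDiag_mul hU]; simp only [pow_succ]

lemma conjDiag_one_sub (hU : Uᵀ * U = 1) (g : Fin n → ℝ) (s : ℝ) :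
    1 - s • conjDiag U g = conjDiag U (fun i => 1 - s * g i) := by
  rw [← conjDiag_one hU]
  unfold conjDiag
  rw [← Matrix.smul_mul, ← Matrix.mul_smul, ← Matrix.sub_mul, ← Matrix.mul_sub, ← diagonal_smul,
    diagonal_sub]
  simp

lemma conjDiag_inv (hU : Uᵀ * U = 1) (g : Fin n → ℝ) (hg : ∀ i, g i ≠ 0) :
    (conjDiag U g)⁻¹ = conjDiag U (fun i => (g i)⁻¹) := by
  apply inv_eq_right_inv
  rw [conjDiag_mul hU, ← conjDiag_one hU]
  simp [hg]

lemma conjDiag_transpose (g : Fin n → ℝ) : (conjDiag U g)ᵀ = conjDiag U g := by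
  simp [conjDiag, Matrix.mul_assoc]

lemma conjDiag_quad (g : Fin n → ℝ) (e : Fin n → ℝ) :
    e ⬝ᵥ (conjDiag U g).mulVec e = ∑ i, g i * (Uᵀ.mulVec e) i ^ 2 := by
  unfold conjDiag
  rw [← mulVec_mulVec, ← mulVec_mulVec, dotProduct_mulVec, ← mulVec_transpose]
  simp only [dotProduct, mulVec_diagonal]
  exact Finset.sum_congr rfl fun i _ => by ring

end conjDiag

/-- Here `b` is any nonnegative upper bound of `1 - x`. For `x ≤ 1` the inequality comes from
`(1 - x) ^ (2p) + x ^ (2p) * (1 - x) ≤ (1 - x) * ((1 - x) + x)`, and for `x ≥ 1` from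
`(x - 1) ^ (2p - 1) ≤ x ^ (2p)`. -/
lemma scalar_bound {p : ℕ} (hp : 2 ≤ p) {x b : ℝ} (hx : 0 ≤ x)
    (hb : 0 ≤ b) (hxb : 1 - x ≤ b) :
    (1 - x) ^ (2 * p) ≤ b + x ^ (2 * p) * (x - 1) := by
  obtain ⟨k, hk⟩ : ∃ k, 2 * p = k + 2 := ⟨2 * p - 2, by omega⟩
  have hev : (1 - x) ^ (2 * p) = (x - 1) ^ (2 * p) := by
    rw [← neg_sub, (even_two_mul p).neg_pow]
  rcases le_total x 1 with h | h
  · have h1 : (1 - x) ^ (k + 1) ≤ 1 - x := pow_le_of_le_one (by linarith) (by linarith) (by omega)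
    have h2 : x ^ (k + 2) ≤ x := pow_le_of_le_one hx h (by omega)
    have h3 : (1 - x) * ((1 - x) ^ (k + 1) + x ^ (k + 2)) ≤ (1 - x) * 1 :=
      mul_le_mul_of_nonneg_left (by linarith) (by linarith)
    rw [hk, pow_succ (1 - x)]
    linarith
  · rw [hev, hk, pow_succ (x - 1)]
    have h1 : (x - 1) ^ (k + 1) ≤ x ^ (k + 1) := pow_le_pow_left₀ (by linarith) (by linarith) _
    have h2 : x ^ (k + 1) ≤ x ^ (k + 2) := pow_le_pow_right₀ h (by omega)
    have h3 := mul_le_mul_of_nonneg_right (h1.trans h2) (by linarith : 0 ≤ x - 1)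
    linarith

/-- For `Q` real symmetric positive definite with smallest and largest
eigenvalues `λ_min`, `λ_max`, an integer `p ≥ 2`, a nonzero `e` and
`σ = (eᵀQ^{2p−1}e)/(eᵀQ^{2p}e)`:
`‖(I − σQ)^p e‖_{Q⁻¹} ≤ √((λ_max − λ_min)/λ_max) · ‖e‖_{Q⁻¹}`,
where `‖v‖_{Q⁻¹} = √(vᵀQ⁻¹v)`. -/
theorem stmt_12 {n : ℕ} {Q : Matrix (Fin n) (Fin n) ℝ} (hQ : Q.PosDef)
    (lmin lmax : ℝ) (hminmem : lmin ∈ spectrum ℝ Q) (hmaxmem : lmax ∈ spectrum ℝ Q)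
    (hbound : ∀ μ ∈ spectrum ℝ Q, lmin ≤ μ ∧ μ ≤ lmax)
    (p : ℕ) (hp : 2 ≤ p) (e : Fin n → ℝ) (he : e ≠ 0)
    (σ : ℝ) (hσ : σ = (e ⬝ᵥ (Q ^ (2 * p - 1)).mulVec e) / (e ⬝ᵥ (Q ^ (2 * p)).mulVec e)) :
    Real.sqrt ((((1 - σ • Q) ^ p).mulVec e) ⬝ᵥ Q⁻¹.mulVec (((1 - σ • Q) ^ p).mulVec e)) ≤
      Real.sqrt ((lmax - lmin) / lmax) * Real.sqrt (e ⬝ᵥ Q⁻¹.mulVec e) := by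
  obtain ⟨U, d, hU, hQd, hd, hrange⟩ : ∃ (U : Matrix (Fin n) (Fin n) ℝ) (d : Fin n → ℝ),
      Uᵀ * U = 1 ∧ Q = conjDiag U d ∧ (∀ i, 0 < d i) ∧ spectrum ℝ Q = Set.range d := by
    refine ⟨hQ.1.eigenvectorUnitary, hQ.1.eigenvalues, ?_, ?_, hQ.eigenvalues_pos,
      hQ.1.spectrum_real_eq_range_eigenvalues⟩
    · have h := Unitary.coe_star_mul_self hQ.1.eigenvectorUnitary
      rwa [star_eq_conjTranspose, conjTranspose_eq_transpose_of_trivial] at h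
    · have h := hQ.1.spectral_theorem
      rw [Unitary.conjStarAlgAut_apply, star_eq_conjTranspose,
        conjTranspose_eq_transpose_of_trivial] at h
      exact h
  have hmin0 : 0 < lmin := by
    rw [hrange] at hminmem
    obtain ⟨i, rfl⟩ := hminmem
    exact hd i
  have hdb : ∀ i, lmin ≤ d i ∧ d i ≤ lmax := fun i => hbound _ (hrange ▸ Set.mem_range_self i)
  have hmax0 : 0 < lmax := hmin0.trans_le (hbound _ hminmem).2
  clear hminmem hmaxmem hbound hrange hQ
  subst hQd
  obtain ⟨c, hc⟩ : ∃ c, c = Uᵀ.mulVec e := ⟨_, rfl⟩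
  obtain ⟨j, hj⟩ : ∃ j, c j ≠ 0 := by
    by_contra! h
    apply he
    have : U.mulVec c = e := by rw [hc, mulVec_mulVec, mul_eq_one_comm.mp hU, one_mulVec]
    rw [← this, show c = 0 from funext h, mulVec_zero]
  have hLHS : (((1 - σ • conjDiag U d) ^ p).mulVec e) ⬝ᵥ
      (conjDiag U d)⁻¹.mulVec (((1 - σ • conjDiag U d) ^ p).mulVec e) =
      ∑ i, (1 - σ * d i) ^ (2 * p) * (d i)⁻¹ * c i ^ 2 := by
    rw [conjDiag_one_sub hU, conjDiag_pow hU, conjDiag_inv hU _ fun i => (hd i).ne']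
    rw [dotProduct_comm, dotProduct_mulVec, ← mulVec_transpose, conjDiag_transpose,
      dotProduct_comm, mulVec_mulVec, mulVec_mulVec, conjDiag_mul hU, conjDiag_mul hU,
      conjDiag_quad, ← hc]
    exact Finset.sum_congr rfl fun i _ => by ring
  rw [hLHS, ← Real.sqrt_mul (div_nonneg (by linarith [hdb j]) hmax0.le),
    conjDiag_inv hU _ fun i => (hd i).ne', conjDiag_quad, ← hc]
  rw [conjDiag_pow hU, conjDiag_pow hU, conjDiag_quad, conjDiag_quad, ← hc] at hσ
  obtain ⟨k, hk⟩ : ∃ k, 2 * p = k + 1 := ⟨2 * p - 1, by omega⟩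
  rw [show 2 * p - 1 = k by omega, hk] at hσ
  set A := ∑ i, d i ^ k * c i ^ 2 with hA
  set B := ∑ i, d i ^ (k + 1) * c i ^ 2 with hB
  have hpos : ∀ m : ℕ, 0 < ∑ i, d i ^ m * c i ^ 2 := fun m =>
    Finset.sum_pos' (fun i _ => by have := hd i; positivity)
      ⟨j, Finset.mem_univ _, by have := hd j; positivity⟩
  have hApos : 0 < A := hpos k
  have hBpos : 0 < B := hpos (k + 1)
  have hσpos : 0 < σ := hσ ▸ div_pos hApos hBpos
  have hσB : σ * B = A := by rw [hσ]; field_simp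
  have hBA : B ≤ lmax * A := by
    rw [hA, hB, Finset.mul_sum]
    refine Finset.sum_le_sum fun i _ => ?_
    have h := mul_le_mul_of_nonneg_right (hdb i).2
      (by have := hd i; positivity : 0 ≤ d i ^ k * c i ^ 2)
    rw [pow_succ]
    linarith
  have hσmax : 1 / lmax ≤ σ := by
    rw [hσ, div_le_div_iff₀ hmax0 hBpos]
    linarith
  have hpt : ∀ i, (1 - σ * d i) ^ (2 * p) ≤
      (lmax - lmin) / lmax + (σ * d i) ^ (2 * p) * (σ * d i - 1) := by
    intro i
    refine scalar_bound hp (mul_pos hσpos (hd i)).le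
      (div_nonneg (by linarith [hdb j]) hmax0.le) ?_
    have h1 : 1 / lmax * lmin ≤ σ * d i :=
      mul_le_mul hσmax (hdb i).1 hmin0.le hσpos.le
    have h2 : (lmax - lmin) / lmax = 1 - 1 / lmax * lmin := by field_simp
    linarith
  apply Real.sqrt_le_sqrt
  calc ∑ i, (1 - σ * d i) ^ (2 * p) * (d i)⁻¹ * c i ^ 2
      ≤ ∑ i, ((lmax - lmin) / lmax * ((d i)⁻¹ * c i ^ 2) +
          σ ^ (k + 1) * (σ * (d i ^ (k + 1) * c i ^ 2) - d i ^ k * c i ^ 2)) := by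
        refine Finset.sum_le_sum fun i _ => ?_
        have hdi := hd i
        have h := mul_le_mul_of_nonneg_right (hpt i)
          (by positivity : 0 ≤ (d i)⁻¹ * c i ^ 2)
        rw [hk] at h ⊢
        refine (mul_assoc _ _ _).trans_le (h.trans_eq ?_)
        rw [add_mul, mul_pow]
        congr 1
        field_simp
        ring
    _ = (lmax - lmin) / lmax * ∑ i, (d i)⁻¹ * c i ^ 2 + σ ^ (k + 1) * (σ * B - A) := by
        rw [Finset.sum_add_distrib, ← Finset.mul_sum, ← Finset.mul_sum, Finset.sum_sub_distrib,
          ← Finset.mul_sum]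
    _ = _ := by rw [hσB]; ring
end

section
/- Let Q be an n×n real symmetric positive definite matrix whose smallest and largest eigenvalues are λ_min and λ_max, let b ∈ ℝ^n, and let x* = Q⁻¹b. Let (p_k)_{k≥0} be any sequence of integers with p_k ≥ 2 for all k (in particular any periodic sequence of orders p_1,…,p_P). Define the ACX sequence by choosing x_0 ∈ ℝ^n and setting x_{k+1} = Σ_{i=0}^{p_k} C(p_k,i) σ_k^i Δ^i x_k, where σ_k = |⟨Δ^{p_k} x_k, Δ^{p_k−1} x_k⟩| / ‖Δ^{p_k} x_k‖² if Δ^{p_k} x_k ≠ 0 and σ_k = 0 otherwise. Then for every k ≥ 0, ‖x_k − x*‖_{Q⁻¹} ≤ (√(1 − λ_min/λ_max))^k · ‖x_0 − x*‖_{Q⁻¹}; in particular the sequence (x_k) converges Q-linearly in the Q⁻¹-norm to the fixed point x* of F. -/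
/-!
Write `e_k = x_k - x*`. Since `Δ^i x = (-Q)^i (x - x*)` for `i ≥ 1`, the binomial theorem gives
`e_{k+1} = (1 - σ_k Q)^{p_k} e_k`. In an orthonormal eigenbasis of `Q`, let `c_i` be the coordinates
of `e_k`, so that `σ_k = Σ λ_i^{2p-1} c_i² / Σ λ_i^{2p} c_i²` with `p = p_k`. The argument rests on the
scalar inequality `(1 - s)^{2p} ≤ (1 - s) (1 - s^{2p})` for `s ≥ 0` (`one_sub_pow_le`). Applied with
`s = σ λ_i`, weighted by `c_i² / λ_i` and summed, it yields
`‖e_{k+1}‖² ≤ Σ (c_i² / λ_i) (1 - σ λ_i) - σ^{2p} Σ λ_i^{2p-1} c_i² (1 - σ λ_i)`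
in the `Q⁻¹`-norm. The last sum vanishes by the choice of `σ`, and `σ λ_i ≥ λ_min / λ_max` because
`σ ≥ 1 / λ_max`; hence `‖e_{k+1}‖² ≤ (1 - λ_min / λ_max) ‖e_k‖²` (`weighted_sum_contraction`).
-/

open Matrix

/-- On `[0, 1]` this holds because `(1 - s)^{2m+1} ≤ 1 - s ≤ 1 - s^{2m+2}`; for `s ≥ 1` because
`(s - 1)^{2m+1} + 1 ≤ s^{2m+1} ≤ s^{2m+2}`. -/
lemma one_sub_pow_le (m : ℕ) {s : ℝ} (hs : 0 ≤ s) :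
    (1 - s) ^ (2 * m + 2) ≤ (1 - s) * (1 - s ^ (2 * m + 2)) := by
  rcases le_total s 1 with h | h
  · have h1 : (1 - s) ^ (2 * m + 1) ≤ 1 - s :=
      pow_le_of_le_one (by linarith) (by linarith) (by omega)
    have h2 : s ^ (2 * m + 2) ≤ s := pow_le_of_le_one hs h (by omega)
    rw [pow_succ' (1 - s)]
    exact mul_le_mul_of_nonneg_left (by linarith) (by linarith)
  · have h1 : (s - 1) ^ (2 * m + 1) + 1 ^ (2 * m + 1) ≤ (s - 1 + 1) ^ (2 * m + 1) :=
      pow_add_pow_le (by linarith) zero_le_one (by omega)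
    have h2 : s ^ (2 * m + 1) ≤ s ^ (2 * m + 2) := pow_le_pow_right₀ h (by omega)
    rw [sub_add_cancel, one_pow] at h1
    have h3 : (1 - s) ^ (2 * m + 2) = (s - 1) * (s - 1) ^ (2 * m + 1) := by
      rw [← pow_succ', ← neg_sub, Even.neg_pow ⟨m + 1, by omega⟩]
    have h4 : (s - 1) * (s - 1) ^ (2 * m + 1) ≤ (s - 1) * (s ^ (2 * m + 2) - 1) :=
      mul_le_mul_of_nonneg_left (by linarith) (by linarith)
    linarith

/-- The one-step contraction in eigencoordinates: `l` lists the eigenvalues, `c` the coordinates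
of the error, and `p = m + 1`. The hypothesis `hs` is the defining equation of the step length `s`
with its denominator cleared. -/
lemma weighted_sum_contraction {ι : Type*} [Fintype ι] (l c : ι → ℝ) (m : ℕ) (s a b : ℝ)
    (hl : ∀ i, 0 < l i) (ha : 0 < a) (hal : ∀ i, a ≤ l i) (hlb : ∀ i, l i ≤ b) (hb : 0 < b)
    (hs : s * ∑ i, l i ^ (2 * m + 2) * c i ^ 2 = ∑ i, l i ^ (2 * m + 1) * c i ^ 2)
    (hpos : 0 < ∑ i, l i ^ (2 * m + 2) * c i ^ 2) :
    ∑ i, (l i)⁻¹ * ((1 - s * l i) ^ (m + 1) * c i) ^ 2 ≤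
      (1 - a / b) * ∑ i, (l i)⁻¹ * c i ^ 2 := by
  have hsb : 1 / b ≤ s := by
    rw [div_le_iff₀ hb]
    by_contra! h
    have h1 : ∑ i, l i ^ (2 * m + 2) * c i ^ 2 ≤ b * ∑ i, l i ^ (2 * m + 1) * c i ^ 2 := by
      rw [Finset.mul_sum]
      refine Finset.sum_le_sum fun i _ => ?_
      rw [pow_succ', mul_assoc]
      exact mul_le_mul_of_nonneg_right (hlb i)
        (mul_nonneg (pow_nonneg (hl i).le _) (sq_nonneg _))
    rw [← hs] at h1
    nlinarith
  have hs0 : 0 < s := lt_of_lt_of_le (by positivity) hsb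
  have hzero : ∑ i, l i ^ (2 * m + 1) * c i ^ 2 * (1 - s * l i) = 0 := by
    have : ∀ i, l i ^ (2 * m + 1) * c i ^ 2 * (1 - s * l i) =
        l i ^ (2 * m + 1) * c i ^ 2 - s * (l i ^ (2 * m + 2) * c i ^ 2) := fun i => by ring
    simp_rw [this]
    rw [Finset.sum_sub_distrib, ← Finset.mul_sum, hs, sub_self]
  have hterm : ∀ i, (l i)⁻¹ * ((1 - s * l i) ^ (m + 1) * c i) ^ 2 ≤
      (1 - a / b) * ((l i)⁻¹ * c i ^ 2) -
        s ^ (2 * m + 2) * (l i ^ (2 * m + 1) * c i ^ 2 * (1 - s * l i)) := by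
    intro i
    have h1 := one_sub_pow_le m (mul_nonneg hs0.le (hl i).le)
    have hw : 0 ≤ (l i)⁻¹ * c i ^ 2 := mul_nonneg (inv_nonneg.2 (hl i).le) (sq_nonneg _)
    have h2 : a / b ≤ s * l i := by
      calc a / b = 1 / b * a := by ring
        _ ≤ s * l i := mul_le_mul hsb (hal i) ha.le hs0.le
    have h3 : (l i)⁻¹ * l i = 1 := inv_mul_cancel₀ (hl i).ne'
    calc (l i)⁻¹ * ((1 - s * l i) ^ (m + 1) * c i) ^ 2
        = ((l i)⁻¹ * c i ^ 2) * (1 - s * l i) ^ (2 * m + 2) := by ring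
      _ ≤ ((l i)⁻¹ * c i ^ 2) * ((1 - a / b) - (s * l i) ^ (2 * m + 2) * (1 - s * l i)) :=
          mul_le_mul_of_nonneg_left (by linarith) hw
      _ = (1 - a / b) * ((l i)⁻¹ * c i ^ 2) - s ^ (2 * m + 2) *
            (((l i)⁻¹ * l i) * l i ^ (2 * m + 1) * c i ^ 2 * (1 - s * l i)) := by ring
      _ = _ := by rw [h3, one_mul]
  calc _ ≤ ∑ i, ((1 - a / b) * ((l i)⁻¹ * c i ^ 2) -
        s ^ (2 * m + 2) * (l i ^ (2 * m + 1) * c i ^ 2 * (1 - s * l i))) :=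
        Finset.sum_le_sum fun i _ => hterm i
    _ = _ := by
      rw [Finset.sum_sub_distrib, ← Finset.mul_sum, ← Finset.mul_sum, hzero, mul_zero, sub_zero]

/-- The spectral theorem in coordinates: the rows of `V` are an orthonormal eigenbasis of `Q`. -/
lemma exists_eigencoordinates {n : ℕ} {Q : Matrix (Fin n) (Fin n) ℝ} (hQ : Q.PosDef) :
    ∃ V : Matrix (Fin n) (Fin n) ℝ, Vᵀ * V = 1 ∧
      ∀ v i, (V *ᵥ (Q *ᵥ v)) i = hQ.1.eigenvalues i * (V *ᵥ v) i := by
  have hU : (hQ.1.eigenvectorUnitary : Matrix (Fin n) (Fin n) ℝ) *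
      star (hQ.1.eigenvectorUnitary : Matrix (Fin n) (Fin n) ℝ) = 1 :=
    Unitary.mul_star_self_of_mem hQ.1.eigenvectorUnitary.2
  refine ⟨star (hQ.1.eigenvectorUnitary : Matrix (Fin n) (Fin n) ℝ), ?_, fun v i => ?_⟩
  · rwa [Matrix.star_eq_conjTranspose, Matrix.conjTranspose_eq_transpose_of_trivial,
      transpose_transpose, ← Matrix.conjTranspose_eq_transpose_of_trivial,
      ← Matrix.star_eq_conjTranspose]
  · have h := hQ.1.conjStarAlgAut_star_eigenvectorUnitary
    rw [Unitary.conjStarAlgAut_star_apply] at h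
    have h2 : star (hQ.1.eigenvectorUnitary : Matrix (Fin n) (Fin n) ℝ) * Q =
        diagonal (RCLike.ofReal ∘ hQ.1.eigenvalues) *
          star (hQ.1.eigenvectorUnitary : Matrix (Fin n) (Fin n) ℝ) := by
      rw [← h, Matrix.mul_assoc, hU, Matrix.mul_one]
    rw [Matrix.mulVec_mulVec, h2, ← Matrix.mulVec_mulVec, Matrix.mulVec_diagonal]
    rfl

/-- A left eigenvector `f` of `Q` sees `Δ^{j+1} x` as `(-μ)^{j+1}` times the error. -/
lemma map_acxDelta_succ {n : ℕ} {Q : Matrix (Fin n) (Fin n) ℝ} {b xs : Fin n → ℝ}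
    (hb : b = Q *ᵥ xs) (f : (Fin n → ℝ) →ₗ[ℝ] ℝ) (μ : ℝ) (hf : ∀ v, f (Q *ᵥ v) = μ * f v)
    (j : ℕ) (y : Fin n → ℝ) :
    f (acxDelta Q b (j + 1) y) = (-μ) ^ (j + 1) * f (y - xs) := by
  induction j generalizing y with
  | zero =>
    simp only [acxDelta, acxF, hb, map_sub, hf]
    ring
  | succ j ih =>
    rw [acxDelta, map_sub, ih, ih]
    simp only [acxF, hb, map_sub, hf]
    ring

/-- One ACX step with parameter `s` multiplies the error by `(1 - s Q)^p`, tested against a left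
eigenvector of `Q`. -/
lemma map_acx_step {n : ℕ} {Q : Matrix (Fin n) (Fin n) ℝ} {b xs : Fin n → ℝ}
    (hb : b = Q *ᵥ xs) (f : (Fin n → ℝ) →ₗ[ℝ] ℝ) (μ : ℝ) (hf : ∀ v, f (Q *ᵥ v) = μ * f v)
    (p : ℕ) (s : ℝ) (y : Fin n → ℝ) :
    f (∑ i ∈ Finset.range (p + 1), ((p.choose i : ℝ) * s ^ i) • acxDelta Q b i y - xs) =
      (1 - s * μ) ^ p * f (y - xs) := by
  have hbin : (1 - s * μ) ^ p = ∑ i ∈ Finset.range (p + 1), (p.choose i : ℝ) * s ^ i * (-μ) ^ i := by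
    rw [sub_eq_neg_add, add_pow]
    refine Finset.sum_congr rfl fun i _ => ?_
    rw [one_pow, mul_one, ← mul_neg, mul_pow]
    ring
  rw [hbin, map_sub, map_sum, Finset.sum_mul, Finset.sum_range_succ', Finset.sum_range_succ' _ p]
  simp only [map_smul, map_acxDelta_succ hb f μ hf, smul_eq_mul, mul_assoc]
  simp [acxDelta, map_sub]
  ring

/-- Convergence theorem for the ACX method applied to
`F(x) = x − (Qx − b)` with `Q` symmetric positive definite (smallest/largest
eigenvalues `λ_min`, `λ_max`) and `x* = Q⁻¹b`. Given any sequence of orders `p_k ≥ 2`,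
step lengths `σ_k = |⟨Δ^{p_k} x_k, Δ^{p_k−1} x_k⟩| / ‖Δ^{p_k} x_k‖²` (and `σ_k = 0` when
`Δ^{p_k} x_k = 0`), and iterates `x_{k+1} = Σ_{i=0}^{p_k} C(p_k,i) σ_k^i Δ^i x_k`, we have
`‖x_k − x*‖_{Q⁻¹} ≤ (√(1 − λ_min/λ_max))^k · ‖x_0 − x*‖_{Q⁻¹}` for every `k ≥ 0`. -/
theorem stmt_13 {n : ℕ} {Q : Matrix (Fin n) (Fin n) ℝ} (hQ : Q.PosDef)
    (lmin lmax : ℝ) (hminmem : lmin ∈ spectrum ℝ Q) (hmaxmem : lmax ∈ spectrum ℝ Q)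
    (hbound : ∀ μ ∈ spectrum ℝ Q, lmin ≤ μ ∧ μ ≤ lmax)
    (b : Fin n → ℝ) (xstar : Fin n → ℝ) (hxstar : xstar = Q⁻¹.mulVec b)
    (p : ℕ → ℕ) (hp : ∀ k, 2 ≤ p k)
    (x : ℕ → Fin n → ℝ) (σ : ℕ → ℝ)
    (hσ : ∀ k, (acxDelta Q b (p k) (x k) ≠ 0 →
        σ k = |acxDelta Q b (p k) (x k) ⬝ᵥ acxDelta Q b (p k - 1) (x k)| /
          (acxDelta Q b (p k) (x k) ⬝ᵥ acxDelta Q b (p k) (x k))) ∧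
      (acxDelta Q b (p k) (x k) = 0 → σ k = 0))
    (hrec : ∀ k, x (k + 1) =
      ∑ i ∈ Finset.range (p k + 1), (((p k).choose i : ℝ) * σ k ^ i) • acxDelta Q b i (x k)) :
    ∀ k : ℕ, Real.sqrt ((x k - xstar) ⬝ᵥ Q⁻¹.mulVec (x k - xstar)) ≤
      Real.sqrt (1 - lmin / lmax) ^ k *
        Real.sqrt ((x 0 - xstar) ⬝ᵥ Q⁻¹.mulVec (x 0 - xstar)) := by
  obtain ⟨V, hV, hVQ⟩ := exists_eigencoordinates hQ
  set l := hQ.1.eigenvalues with hl_def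
  have hl : ∀ i, 0 < l i := hQ.eigenvalues_pos
  have hlb : ∀ i, lmin ≤ l i ∧ l i ≤ lmax := fun i =>
    hbound _ (hQ.1.eigenvalues_mem_spectrum_real i)
  have hmin : 0 < lmin := by
    rw [hQ.1.spectrum_real_eq_range_eigenvalues] at hminmem
    obtain ⟨i, rfl⟩ := hminmem
    exact hl i
  have hmax : 0 < lmax := hmin.trans_le (hbound _ hminmem).2
  have hdet : IsUnit Q.det := hQ.det_pos.ne'.isUnit
  have hb : b = Q *ᵥ xstar := by
    rw [hxstar, mulVec_mulVec, Matrix.mul_nonsing_inv _ hdet, one_mulVec]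
  have hdot : ∀ v w : Fin n → ℝ, v ⬝ᵥ w = ∑ i, (V *ᵥ v) i * (V *ᵥ w) i := fun v w => by
    change _ = (V *ᵥ v) ⬝ᵥ (V *ᵥ w)
    rw [dotProduct_mulVec, vecMul_mulVec, hV, Matrix.vecMul_one]
  have hinv : ∀ v i, (V *ᵥ (Q⁻¹ *ᵥ v)) i = (l i)⁻¹ * (V *ᵥ v) i := fun v i => by
    have h := hVQ (Q⁻¹ *ᵥ v) i
    rw [mulVec_mulVec v Q, Matrix.mul_nonsing_inv _ hdet, one_mulVec] at h
    rw [h, inv_mul_cancel_left₀ (hl i).ne']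
  have hnorm : ∀ v : Fin n → ℝ, v ⬝ᵥ Q⁻¹ *ᵥ v = ∑ i, (l i)⁻¹ * (V *ᵥ v) i ^ 2 := fun v => by
    rw [hdot]
    refine Finset.sum_congr rfl fun i _ => ?_
    rw [hinv]
    ring
  -- the `i`-th eigencoordinate as a linear functional
  let f : Fin n → (Fin n → ℝ) →ₗ[ℝ] ℝ := fun i => (LinearMap.proj i).comp V.mulVecLin
  have hstep : ∀ k, (x (k + 1) - xstar) ⬝ᵥ Q⁻¹ *ᵥ (x (k + 1) - xstar) ≤
      (1 - lmin / lmax) * ((x k - xstar) ⬝ᵥ Q⁻¹ *ᵥ (x k - xstar)) := by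
    intro k
    obtain ⟨m, hm⟩ : ∃ m, p k = m + 2 := ⟨p k - 2, by have := hp k; omega⟩
    set c := V *ᵥ (x k - xstar) with hc
    have hnext : ∀ i, (V *ᵥ (x (k + 1) - xstar)) i = (1 - σ k * l i) ^ (m + 2) * c i := by
      intro i
      rw [hrec k, hm]
      exact map_acx_step hb (f i) (l i) (fun v => hVQ v i) (m + 2) (σ k) (x k)
    have hD : ∀ j i, (V *ᵥ acxDelta Q b (j + 1) (x k)) i = (-l i) ^ (j + 1) * c i := fun j i =>
      map_acxDelta_succ hb (f i) (l i) (fun v => hVQ v i) j (x k)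
    have hDD : acxDelta Q b (p k) (x k) ⬝ᵥ acxDelta Q b (p k) (x k) =
        ∑ i, l i ^ (2 * (m + 1) + 2) * c i ^ 2 := by
      rw [hm, hdot]
      refine Finset.sum_congr rfl fun i _ => ?_
      rw [hD, neg_pow]
      linear_combination (l i ^ (2 * (m + 1) + 2) * c i ^ 2) *
        (Even.neg_one_pow (α := ℝ) (n := (m + 1 + 1) + (m + 1 + 1)) ⟨_, rfl⟩)
    have hDD' : acxDelta Q b (p k) (x k) ⬝ᵥ acxDelta Q b (p k - 1) (x k) =
        -∑ i, l i ^ (2 * (m + 1) + 1) * c i ^ 2 := by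
      rw [hm, hdot, ← Finset.sum_neg_distrib]
      refine Finset.sum_congr rfl fun i _ => ?_
      rw [show m + 2 - 1 = m + 1 from rfl, hD, hD, neg_pow, neg_pow (l i) (m + 1)]
      linear_combination (-l i ^ (2 * (m + 1) + 1) * c i ^ 2) *
        (Even.neg_one_pow (α := ℝ) (n := (m + 1) + (m + 1)) ⟨_, rfl⟩)
    have hS : 0 ≤ ∑ i, l i ^ (2 * (m + 1) + 1) * c i ^ 2 :=
      Finset.sum_nonneg fun i _ => mul_nonneg (pow_nonneg (hl i).le _) (sq_nonneg _)
    rw [hnorm, hnorm]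
    simp_rw [hnext]
    by_cases h0 : acxDelta Q b (p k) (x k) = 0
    · have hc0 : ∀ i, c i = 0 := fun i => by
        have h := hD (m + 1) i
        rw [← hm, h0, mulVec_zero, Pi.zero_apply] at h
        exact (mul_eq_zero.1 h.symm).resolve_left (pow_ne_zero _ (neg_ne_zero.2 (hl i).ne'))
      simp [← hc, hc0]
    · have hpos : 0 < ∑ i, l i ^ (2 * (m + 1) + 2) * c i ^ 2 := by
        rw [← hDD]
        exact lt_of_le_of_ne (Finset.sum_nonneg fun i _ => mul_self_nonneg _)
          fun h => h0 (dotProduct_self_eq_zero.1 h.symm)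
      refine weighted_sum_contraction l c (m + 1) (σ k) lmin lmax hl hmin (fun i => (hlb i).1)
        (fun i => (hlb i).2) hmax ?_ hpos
      rw [(hσ k).1 h0, hDD, hDD', abs_neg, abs_of_nonneg hS, div_mul_cancel₀ _ hpos.ne']
  have hrate : 0 ≤ 1 - lmin / lmax :=
    sub_nonneg.2 ((div_le_one hmax).2 (hbound _ hminmem).2)
  intro k
  induction k with
  | zero => simp
  | succ k ih =>
    calc _ ≤ √((1 - lmin / lmax) * ((x k - xstar) ⬝ᵥ Q⁻¹ *ᵥ (x k - xstar))) :=
          Real.sqrt_le_sqrt (hstep k)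
      _ = √(1 - lmin / lmax) * √((x k - xstar) ⬝ᵥ Q⁻¹ *ᵥ (x k - xstar)) :=
          Real.sqrt_mul hrate _
      _ ≤ √(1 - lmin / lmax) * (√(1 - lmin / lmax) ^ k *
            √((x 0 - xstar) ⬝ᵥ Q⁻¹ *ᵥ (x 0 - xstar))) :=
          mul_le_mul_of_nonneg_left ih (Real.sqrt_nonneg _)
      _ = _ := by rw [pow_succ', mul_assoc]
end

section
/- Let A be an n×n real symmetric positive definite matrix whose smallest and largest eigenvalues are λ_min and λ_max, let b ∈ ℝ^n, set F(x) = x − (Ax − b) and x* = A⁻¹b. For x_k ∈ ℝ^n with e_k = x_k − x* ≠ 0, let s_k = ⟨Δ²x_k, Δx_k⟩ / ‖Δ²x_k‖² be Lemaréchal's step length and x_{k+1} = x_k − s_k Δx_k. Then s_k = −(e_kᵀA³e_k)/(e_kᵀA⁴e_k), the new error satisfies e_{k+1} = x_{k+1} − x* = (I + s_k A) e_k, and −1/λ_min ≤ s_k ≤ −1/λ_max. -/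
/-!
With `e = x - x*` and `v = A e`, the differences are `Δx = -v` and `Δ²x = A v`, so
`s = -⟨A v, v⟩ / ‖A v‖²`; symmetry of `A` turns this into the quotient of `eᵀA³e` and `eᵀA⁴e`, and
the error recursion is linear algebra. The bounds on `s` amount to
`λ_min ⟨A v, v⟩ ≤ ‖A v‖² ≤ λ_max ⟨A v, v⟩`, which `quadratic_form_nonneg` obtains by expanding `v`
in an orthonormal eigenbasis.
-/

open Matrix

/-- In an orthonormal eigenbasis `uᵢ` of `A` with eigenvalues `λᵢ`, this says
`∑ λᵢ * f(λᵢ) * ⟨uᵢ, v⟩² ≥ 0` for `f(t) = α + β t`, for which it suffices that `t * f t ≥ 0` on the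
spectrum. -/
lemma quadratic_form_nonneg {n : ℕ} {A : Matrix (Fin n) (Fin n) ℝ} (hA : A.IsHermitian) (α β : ℝ)
    (hf : ∀ μ ∈ spectrum ℝ A, 0 ≤ μ * (α + β * μ)) (v : Fin n → ℝ) :
    0 ≤ α * (A.mulVec v ⬝ᵥ v) + β * (A.mulVec v ⬝ᵥ A.mulVec v) := by
  have parseval : ∀ y z : Fin n → ℝ, y ⬝ᵥ z =
      ∑ i, (y ⬝ᵥ (hA.eigenvectorBasis i).ofLp) * (z ⬝ᵥ (hA.eigenvectorBasis i).ofLp) := by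
    intro y z
    have h := hA.eigenvectorBasis.sum_inner_mul_inner (WithLp.toLp 2 y) (WithLp.toLp 2 z)
    simp only [EuclideanSpace.inner_eq_star_dotProduct, star_trivial] at h
    rw [dotProduct_comm y z, ← h]
    refine Finset.sum_congr rfl fun i _ => ?_
    rw [dotProduct_comm y]
  have eig : ∀ i, A.mulVec v ⬝ᵥ (hA.eigenvectorBasis i).ofLp =
      hA.eigenvalues i * (v ⬝ᵥ (hA.eigenvectorBasis i).ofLp) := by
    intro i
    have hT : Aᵀ = A := by simpa using hA.eq
    have hv : A.mulVec v = v ᵥ* A := by rw [← mulVec_transpose, hT]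
    rw [hv, ← dotProduct_mulVec, hA.mulVec_eigenvectorBasis, dotProduct_smul, smul_eq_mul]
  rw [parseval (A.mulVec v) v, parseval (A.mulVec v) (A.mulVec v), Finset.mul_sum, Finset.mul_sum,
    ← Finset.sum_add_distrib]
  refine Finset.sum_nonneg fun i _ => ?_
  rw [eig]
  have h := mul_nonneg (hf _ (hA.eigenvalues_mem_spectrum_real i))
    (sq_nonneg (v ⬝ᵥ (hA.eigenvectorBasis i).ofLp))
  linarith

/-- For `A` real symmetric positive definite with smallest/largest
eigenvalues `λ_min`, `λ_max`, `F(x) = x − (Ax − b)`, `x* = A⁻¹b`, `e_k = x_k − x* ≠ 0` and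
Lemaréchal's step length `s_k = ⟨Δ²x_k, Δx_k⟩ / ‖Δ²x_k‖²`, with `x_{k+1} = x_k − s_k Δx_k`:
`s_k = −(e_kᵀA³e_k)/(e_kᵀA⁴e_k)`, `x_{k+1} − x* = (I + s_k A) e_k`, and
`−1/λ_min ≤ s_k ≤ −1/λ_max`. -/
theorem stmt_16 {n : ℕ} {A : Matrix (Fin n) (Fin n) ℝ} (hA : A.PosDef)
    (lmin lmax : ℝ) (hminmem : lmin ∈ spectrum ℝ A) (hmaxmem : lmax ∈ spectrum ℝ A)
    (hbound : ∀ μ ∈ spectrum ℝ A, lmin ≤ μ ∧ μ ≤ lmax)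
    (b : Fin n → ℝ) (xstar : Fin n → ℝ) (hxstar : xstar = A⁻¹.mulVec b)
    (x : Fin n → ℝ) (he : x - xstar ≠ 0)
    (s : ℝ) (hs : s = (acxDelta A b 2 x ⬝ᵥ acxDelta A b 1 x) /
      (acxDelta A b 2 x ⬝ᵥ acxDelta A b 2 x)) :
    s = -((x - xstar) ⬝ᵥ (A ^ 3).mulVec (x - xstar)) /
        ((x - xstar) ⬝ᵥ (A ^ 4).mulVec (x - xstar)) ∧
      (x - s • acxDelta A b 1 x) - xstar =
        ((1 : Matrix (Fin n) (Fin n) ℝ) + s • A).mulVec (x - xstar) ∧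
      -(1 / lmin) ≤ s ∧ s ≤ -(1 / lmax) := by
  have hT : Aᵀ = A := by simpa using hA.isHermitian.eq
  have hpos : ∀ μ ∈ spectrum ℝ A, 0 < μ := by
    intro μ hμ
    rw [hA.isHermitian.spectrum_real_eq_range_eigenvalues] at hμ
    obtain ⟨i, rfl⟩ := hμ
    exact hA.eigenvalues_pos i
  have hlmin := hpos _ hminmem
  have hlmax := hpos _ hmaxmem
  have hinj : ∀ u : Fin n → ℝ, u ≠ 0 → A.mulVec u ≠ 0 := by
    intro u hu h
    have := hA.dotProduct_mulVec_pos hu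
    simp [h] at this
  have hAx : A.mulVec xstar = b := by
    rw [hxstar, mulVec_mulVec, mul_nonsing_inv _ ((isUnit_iff_isUnit_det A).mp hA.isUnit),
      one_mulVec]
  have h1 : acxDelta A b 1 x = -A.mulVec (x - xstar) := by
    simp only [acxDelta, acxF, mulVec_sub, hAx]
    abel
  have h2 : acxDelta A b 2 x = A.mulVec (A.mulVec (x - xstar)) := by
    simp only [acxDelta, acxF, mulVec_sub, hAx]
    abel
  rw [h1, h2] at hs
  rw [h1]
  have hmove : ∀ y z : Fin n → ℝ, y ⬝ᵥ A.mulVec z = A.mulVec y ⬝ᵥ z := by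
    intro y z
    rw [dotProduct_mulVec, ← mulVec_transpose, hT]
  generalize hdef : x - xstar = e at *
  have h3 : e ⬝ᵥ (A ^ 3).mulVec e = A.mulVec (A.mulVec e) ⬝ᵥ A.mulVec e := by
    simp only [pow_succ, pow_zero, one_mul, ← mulVec_mulVec, hmove]
  have h4 : e ⬝ᵥ (A ^ 4).mulVec e = A.mulVec (A.mulVec e) ⬝ᵥ A.mulVec (A.mulVec e) := by
    simp only [pow_succ, pow_zero, one_mul, ← mulVec_mulVec, hmove]
  have hv := hinj e he
  have hlow := quadratic_form_nonneg hA.isHermitian (-lmin) 1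
    (fun μ hμ => mul_nonneg (hpos μ hμ).le (by linarith [(hbound μ hμ).1])) (A.mulVec e)
  have hupp := quadratic_form_nonneg hA.isHermitian lmax (-1)
    (fun μ hμ => mul_nonneg (hpos μ hμ).le (by linarith [(hbound μ hμ).2])) (A.mulVec e)
  have hq : 0 < A.mulVec (A.mulVec e) ⬝ᵥ A.mulVec (A.mulVec e) := by
    simpa using dotProduct_star_self_pos_iff.mpr (hinj _ hv)
  rw [dotProduct_neg] at hs
  refine ⟨by rw [hs, h3, h4], ?_, ?_, ?_⟩
  · rw [add_mulVec, one_mulVec, smul_mulVec, ← hdef, smul_neg]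
    abel
  · rw [hs, neg_div, neg_le_neg_iff, div_le_div_iff₀ hq hlmin]
    linarith
  · rw [hs, neg_div, neg_le_neg_iff, div_le_div_iff₀ hlmax hq]
    linarith
end
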